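/- arXiv:2404.01788 — 2 statements merged into one kernel-verified Lean document; each statement's English description precedes it below -/
import Mathlib

section
/- For every positive integer n, ∑_{π ∈ 𝔖_n} q^{depth(π)} t^{exc(π)} = ∑_{π ∈ 𝔖_n} q^{drp(π)} t^{des(π)} as polynomials in the two variables q and t over the integers. -/
open Finset

/-- The one-line notation value of `π` at position `k ∈ {1,…,n}`:
`oneLine π k = π(k)` with `1`-indexed positions and values. -/
def oneLine {n : ℕ} (π : Equiv.Perm (Fin n)) (k : ℕ) : ℕ :=
  if h : k - 1 < n then ((π ⟨k - 1, h⟩ : Fin n) : ℕ) + 1 else k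

/-- `SUC(π) = {i ∈ {1,…,n-1} : π(i+1) = π(i)+1}` (position set). -/
def SUC {n : ℕ} (π : Equiv.Perm (Fin n)) : Finset ℕ :=
  (Finset.Icc 1 (n - 1)).filter (fun i => oneLine π (i + 1) = oneLine π i + 1)

/-- `FIX(π) = {i ∈ {1,…,n-1} : π(i) = i}` (position set). -/
def FIX {n : ℕ} (π : Equiv.Perm (Fin n)) : Finset ℕ :=
  (Finset.Icc 1 (n - 1)).filter (fun i => oneLine π i = i)

/-- `Asc₂(π) = {π(i+1) : i ∈ {1,…,n-1}, π(i+1) ≥ π(i)+2}` (value set). -/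
def Asc2 {n : ℕ} (π : Equiv.Perm (Fin n)) : Finset ℕ :=
  ((Finset.Icc 1 (n - 1)).filter (fun i => oneLine π i + 2 ≤ oneLine π (i + 1))).image
    (fun i => oneLine π (i + 1))

/-- `Des(π) = {π(i+1) : i ∈ {1,…,n-1}, π(i) > π(i+1)}` (value set). -/
def DesSet {n : ℕ} (π : Equiv.Perm (Fin n)) : Finset ℕ :=
  ((Finset.Icc 1 (n - 1)).filter (fun i => oneLine π (i + 1) < oneLine π i)).image
    (fun i => oneLine π (i + 1))

/-- `Suc(π) = {π(i+1) : i ∈ {1,…,n-1}, π(i+1) = π(i)+1}` (value set). -/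
def SucSet {n : ℕ} (π : Equiv.Perm (Fin n)) : Finset ℕ :=
  ((Finset.Icc 1 (n - 1)).filter (fun i => oneLine π (i + 1) = oneLine π i + 1)).image
    (fun i => oneLine π (i + 1))

/-- `Aexc(π) = {π(i) : i ∈ {2,…,n}, π(i) < i}` (value set). -/
def Aexc {n : ℕ} (π : Equiv.Perm (Fin n)) : Finset ℕ :=
  ((Finset.Icc 2 n).filter (fun i => oneLine π i < i)).image (fun i => oneLine π i)

/-- `Êxc(π) = {π(i) : i ∈ {2,…,n}, π(i) > i}` (value set). -/
def ExcHat {n : ℕ} (π : Equiv.Perm (Fin n)) : Finset ℕ :=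
  ((Finset.Icc 2 n).filter (fun i => i < oneLine π i)).image (fun i => oneLine π i)

/-- `F̂ix(π) = {π(i) : i ∈ {2,…,n}, π(i) = i}` (value set). -/
def FixHat {n : ℕ} (π : Equiv.Perm (Fin n)) : Finset ℕ :=
  ((Finset.Icc 2 n).filter (fun i => oneLine π i = i)).image (fun i => oneLine π i)

/-- `depth(π) = ∑_{i : π(i) > i} (π(i) − i)`. -/
def depthStat {n : ℕ} (π : Equiv.Perm (Fin n)) : ℕ :=
  ∑ i ∈ (Finset.Icc 1 n).filter (fun i => i < oneLine π i), (oneLine π i - i)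

/-- `drp(π) = ∑_{i ∈ {1,…,n-1} : π(i) > π(i+1)} (π(i) − π(i+1))`. -/
def drpStat {n : ℕ} (π : Equiv.Perm (Fin n)) : ℕ :=
  ∑ i ∈ (Finset.Icc 1 (n - 1)).filter (fun i => oneLine π (i + 1) < oneLine π i),
    (oneLine π i - oneLine π (i + 1))

/-- `exc(π) = |{i ∈ {1,…,n} : π(i) > i}|`. -/
def excNum {n : ℕ} (π : Equiv.Perm (Fin n)) : ℕ :=
  ((Finset.Icc 1 n).filter (fun i => i < oneLine π i)).card

/-- `nexc(π) = |{i ∈ {1,…,n} : π(i) < i}|`. -/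
def nexcNum {n : ℕ} (π : Equiv.Perm (Fin n)) : ℕ :=
  ((Finset.Icc 1 n).filter (fun i => oneLine π i < i)).card

/-- `des(π) = |{i ∈ {1,…,n-1} : π(i) > π(i+1)}|`. -/
def desNum {n : ℕ} (π : Equiv.Perm (Fin n)) : ℕ :=
  ((Finset.Icc 1 (n - 1)).filter (fun i => oneLine π (i + 1) < oneLine π i)).card

/-- `asc(π) = |{i ∈ {1,…,n-1} : π(i) < π(i+1)}|`. -/
def ascNum {n : ℕ} (π : Equiv.Perm (Fin n)) : ℕ :=
  ((Finset.Icc 1 (n - 1)).filter (fun i => oneLine π i < oneLine π (i + 1))).card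

/-- `inv(π) = |{(i,j) : 1 ≤ i < j ≤ n, π(i) > π(j)}|`. -/
def invNum {n : ℕ} (π : Equiv.Perm (Fin n)) : ℕ :=
  (((Finset.Icc 1 n) ×ˢ (Finset.Icc 1 n)).filter
    (fun p : ℕ × ℕ => p.1 < p.2 ∧ oneLine π p.2 < oneLine π p.1)).card

/-- The permutation of `Fin (n + 1)` whose one-line word is obtained from that of `σ` by inserting
the largest letter at position `p`. -/
def insertLast {n : ℕ} (σ : Equiv.Perm (Fin n)) (p : Fin (n + 1)) : Equiv.Perm (Fin (n + 1)) :=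
  (finSuccEquiv' p).trans (σ.optionCongr.trans finSuccEquivLast.symm)

lemma insertLast_self {n : ℕ} (σ : Equiv.Perm (Fin n)) (p : Fin (n + 1)) :
    insertLast σ p p = Fin.last n := by
  simp [insertLast]

lemma insertLast_succAbove {n : ℕ} (σ : Equiv.Perm (Fin n)) (p : Fin (n + 1)) (j : Fin n) :
    insertLast σ p (p.succAbove j) = (σ j).castSucc := by
  simp [insertLast]

lemma insertLast_last_castSucc {n : ℕ} (σ : Equiv.Perm (Fin n)) (j : Fin n) :
    insertLast σ (Fin.last n) j.castSucc = (σ j).castSucc := by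
  simpa using insertLast_succAbove σ (Fin.last n) j

lemma insertLast_left_injective {n : ℕ} (p : Fin (n + 1)) :
    Function.Injective fun σ : Equiv.Perm (Fin n) => insertLast σ p := by
  intro σ τ h
  ext j
  have := DFunLike.congr_fun h (p.succAbove j)
  simp only [insertLast_succAbove] at this
  simpa using congrArg Fin.val this

lemma insertLast_bijective (n : ℕ) :
    Function.Bijective fun x : Equiv.Perm (Fin n) × Fin (n + 1) => insertLast x.1 x.2 := by
  rw [Fintype.bijective_iff_injective_and_card]
  constructor
  · rintro ⟨σ, p⟩ ⟨τ, q⟩ h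
    simp only at h
    have hpq : p = q := by
      apply (insertLast τ q).injective
      rw [insertLast_self, ← h, insertLast_self]
    subst hpq
    rw [insertLast_left_injective p h]
  · simp [Fintype.card_perm, Nat.factorial_succ, mul_comm]

/-- The permutation of `Fin (n + 1)` obtained from `σ` by inserting the largest element just after
`b` in its cycle, or as a fixed point if `b` is that element. -/
def insertCycle {n : ℕ} (σ : Equiv.Perm (Fin n)) (b : Fin (n + 1)) : Equiv.Perm (Fin (n + 1)) :=
  insertLast σ (Fin.last n) * Equiv.swap b (Fin.last n)

lemma insertCycle_self {n : ℕ} (σ : Equiv.Perm (Fin n)) (b : Fin (n + 1)) :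
    insertCycle σ b b = Fin.last n := by
  simp [insertCycle, insertLast_self]

lemma insertCycle_bijective (n : ℕ) :
    Function.Bijective fun x : Equiv.Perm (Fin n) × Fin (n + 1) => insertCycle x.1 x.2 := by
  rw [Fintype.bijective_iff_injective_and_card]
  constructor
  · rintro ⟨σ, p⟩ ⟨τ, q⟩ h
    simp only at h
    have hpq : p = q := by
      apply (insertCycle τ q).injective
      rw [insertCycle_self, ← h, insertCycle_self]
    subst hpq
    rw [insertLast_left_injective _ (mul_right_cancel h)]
  · simp [Fintype.card_perm, Nat.factorial_succ, mul_comm]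

/-- The excess of `π` at each point, truncated at `0`. -/
def excess {n : ℕ} (π : Equiv.Perm (Fin n)) (c : Fin n) : ℕ := (π c : ℕ) - c

/-- The drop of the word of `π` onto each letter from the preceding one, truncated at `0`. -/
def dropOnto {n : ℕ} (π : Equiv.Perm (Fin n)) (c : Fin n) : ℕ :=
  (π ⟨(π.symm c : ℕ) - 1, by omega⟩ : ℕ) - c

lemma dropOnto_apply {n : ℕ} (π : Equiv.Perm (Fin n)) (i : Fin n) :
    dropOnto π (π i) = (π ⟨(i : ℕ) - 1, by omega⟩ : ℕ) - π i := by
  simp [dropOnto]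

/-- The effect on `excess` and `dropOnto` of inserting a new largest element before `b`. -/
def insertDrop {n : ℕ} (d : Fin n → ℕ) (b : Fin (n + 1)) : Fin (n + 1) → ℕ :=
  Function.update (Fin.snoc (α := fun _ => ℕ) d 0) b (n - b)

lemma insertDrop_last {n : ℕ} (d : Fin n → ℕ) (b : Fin (n + 1)) :
    insertDrop d b (Fin.last n) = 0 := by
  unfold insertDrop
  by_cases h : Fin.last n = b
  · subst h; simp
  · simp [Function.update_of_ne h]

lemma excess_insertCycle {n : ℕ} (σ : Equiv.Perm (Fin n)) (b : Fin (n + 1)) :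
    excess (insertCycle σ b) = insertDrop (excess σ) b := by
  funext c
  induction c using Fin.lastCases with
  | last =>
    rw [insertDrop_last, excess, Fin.val_last]
    omega
  | cast c =>
    by_cases h : c.castSucc = b
    · subst h
      simp [excess, insertCycle_self, insertDrop]
    · simp [excess, insertCycle, insertDrop, Function.update_of_ne h,
        Equiv.swap_apply_of_ne_of_ne h (Fin.castSucc_ne_last c), insertLast_last_castSucc]

lemma dropOnto_insertLast {n : ℕ} (σ : Equiv.Perm (Fin n)) (p : Fin (n + 1)) :
    dropOnto (insertLast σ p) = insertDrop (dropOnto σ) (insertLast σ (Fin.last n) p) := by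
  funext c
  obtain ⟨i, rfl⟩ := (insertLast σ p).surjective c
  rw [dropOnto_apply]
  induction i using Fin.succAboveCases p with
  | x =>
    rw [insertLast_self, insertDrop_last, Fin.val_last]
    omega
  | p j =>
    by_cases h : j.castSucc = p
    · subst h
      have hp : (⟨((j.castSucc.succAbove j : Fin (n + 1)) : ℕ) - 1, by omega⟩ : Fin (n + 1)) =
          j.castSucc := by
        ext; simp
      rw [hp, insertLast_self, insertLast_succAbove, insertLast_last_castSucc]
      simp [insertDrop]
    · have hp : (⟨((p.succAbove j : Fin (n + 1)) : ℕ) - 1, by omega⟩ : Fin (n + 1)) =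
          p.succAbove ⟨(j : ℕ) - 1, by omega⟩ := by
        have h' : (j : ℕ) ≠ p := fun e => h (Fin.ext e)
        ext
        simp only [Fin.succAbove, Fin.lt_def, Fin.val_castSucc]
        split_ifs <;> simp <;> omega
      have hb : (σ j).castSucc ≠ insertLast σ (Fin.last n) p := by
        rw [← insertLast_last_castSucc]
        exact fun e => h ((insertLast σ (Fin.last n)).injective e)
      rw [hp, insertLast_succAbove, insertLast_succAbove, insertDrop, Function.update_of_ne hb]
      simp [dropOnto_apply]

/-- `excess` and `dropOnto` are equidistributed over the symmetric group. -/
lemma sum_excess_eq_sum_dropOnto {M : Type*} [AddCommMonoid M] (n : ℕ) (F : (Fin n → ℕ) → M) :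
    ∑ π : Equiv.Perm (Fin n), F (excess π) = ∑ π : Equiv.Perm (Fin n), F (dropOnto π) := by
  induction n with
  | zero =>
    exact Finset.sum_congr rfl fun π _ => congrArg F (Subsingleton.elim _ _)
  | succ n ih =>
    rw [← (insertCycle_bijective n).sum_comp fun π => F (excess π),
      ← (insertLast_bijective n).sum_comp fun π => F (dropOnto π),
      Fintype.sum_prod_type, Fintype.sum_prod_type]
    simp only [excess_insertCycle, dropOnto_insertLast]
    rw [ih fun d => ∑ b, F (insertDrop d b)]
    exact Finset.sum_congr rfl fun σ _ =>
      (Equiv.sum_comp (insertLast σ (Fin.last n)) fun b => F (insertDrop (dropOnto σ) b)).symm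

lemma oneLine_succ {n : ℕ} (π : Equiv.Perm (Fin n)) (i : Fin n) :
    oneLine π (i + 1) = π i + 1 := by
  simp [oneLine]

lemma sum_Icc_oneLine_sub_self {n : ℕ} (π : Equiv.Perm (Fin n)) (g : ℕ → ℕ) :
    ∑ i ∈ Finset.Icc 1 n, g (oneLine π i - i) = ∑ c, g (excess π c) := by
  rw [← Finset.Ico_succ_right_eq_Icc, Finset.sum_Ico_eq_sum_range,
    show Order.succ n - 1 = n by simp, Finset.sum_range]
  refine Finset.sum_congr rfl fun i _ => ?_
  rw [add_comm 1, oneLine_succ, excess, Nat.add_sub_add_right]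

lemma sum_Icc_oneLine_sub_succ {n : ℕ} (π : Equiv.Perm (Fin n)) (g : ℕ → ℕ) (hg : g 0 = 0) :
    ∑ i ∈ Finset.Icc 1 (n - 1), g (oneLine π i - oneLine π (i + 1)) =
      ∑ c, g (dropOnto π c) := by
  cases n with
  | zero => simp
  | succ m =>
    rw [← Equiv.sum_comp π fun c => g (dropOnto π c), Fin.sum_univ_succ,
      ← Finset.Ico_succ_right_eq_Icc, Finset.sum_Ico_eq_sum_range]
    simp only [dropOnto_apply]
    simp only [Fin.val_zero, zero_tsub, Fin.mk_zero, tsub_self, hg, zero_add]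
    rw [show Order.succ (m + 1 - 1) - 1 = m by simp, Finset.sum_range]
    refine Finset.sum_congr rfl fun i _ => ?_
    rw [add_comm 1]
    have h₁ := oneLine_succ π i.castSucc
    have h₂ := oneLine_succ π i.succ
    simp only [Fin.val_castSucc, Fin.val_succ] at h₁ h₂
    rw [h₁, h₂, Nat.add_sub_add_right]
    rfl

lemma sum_filter_lt_sub (s : Finset ℕ) (a b : ℕ → ℕ) :
    ∑ i ∈ s.filter (fun i => b i < a i), (a i - b i) = ∑ i ∈ s, (a i - b i) := by
  rw [Finset.sum_filter]
  exact Finset.sum_congr rfl fun i _ => by split_ifs <;> omega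

lemma card_filter_lt (s : Finset ℕ) (a b : ℕ → ℕ) :
    (s.filter (fun i => b i < a i)).card = ∑ i ∈ s, min 1 (a i - b i) := by
  rw [Finset.card_filter]
  exact Finset.sum_congr rfl fun i _ => by split_ifs <;> omega

lemma depthStat_eq {n : ℕ} (π : Equiv.Perm (Fin n)) : depthStat π = ∑ c, excess π c := by
  rw [depthStat, sum_filter_lt_sub, sum_Icc_oneLine_sub_self π fun x => x]

lemma excNum_eq {n : ℕ} (π : Equiv.Perm (Fin n)) : excNum π = ∑ c, min 1 (excess π c) := by
  rw [excNum, card_filter_lt, sum_Icc_oneLine_sub_self π (min 1)]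

lemma drpStat_eq {n : ℕ} (π : Equiv.Perm (Fin n)) : drpStat π = ∑ c, dropOnto π c := by
  rw [drpStat, sum_filter_lt_sub, sum_Icc_oneLine_sub_succ π (fun x => x) rfl]

lemma desNum_eq {n : ℕ} (π : Equiv.Perm (Fin n)) : desNum π = ∑ c, min 1 (dropOnto π c) := by
  rw [desNum, card_filter_lt, sum_Icc_oneLine_sub_succ π (min 1) rfl]

/-- ∑ q^{depth(π)} t^{exc(π)} = ∑ q^{drp(π)} t^{des(π)}
as polynomials in two variables over ℤ. -/
theorem stmt5 (n : ℕ) (hn : 0 < n) :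
    (∑ π : Equiv.Perm (Fin n),
        (MvPolynomial.X 0 : MvPolynomial (Fin 2) ℤ) ^ depthStat π *
          MvPolynomial.X 1 ^ excNum π) =
      ∑ π : Equiv.Perm (Fin n),
        (MvPolynomial.X 0 : MvPolynomial (Fin 2) ℤ) ^ drpStat π *
          MvPolynomial.X 1 ^ desNum π := by
  simp only [depthStat_eq, excNum_eq, drpStat_eq, desNum_eq]
  exact sum_excess_eq_sum_dropOnto n fun d =>
    (MvPolynomial.X 0 : MvPolynomial (Fin 2) ℤ) ^ (∑ c, d c) *
      MvPolynomial.X 1 ^ (∑ c, min 1 (d c))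
end

section
/- For every integer n ≥ 2, let B be the set of permutations w of {1,...,n} with w(1) ∉ {1,2} (i.e., w(1) ≥ 3). Then there exists a bijection Φ̃ from B to B such that for every w ∈ B, sign(Φ̃(w)) = sign(w) and depth(w) = drp(Φ̃(w)). -/
open Finset

theorem card_fiber_two_mul {β : Type*} [Fintype β] [DecidableEq β] (f : β → ℕ) (s : β → ℤˣ)
    (T : β → β) (hT : Function.Involutive T) (hf : ∀ b, f (T b) = f b)
    (hs : ∀ b, s (T b) = -s b) (d : ℕ) (u : ℤˣ) :
    2 * #{b | f b = d ∧ s b = u} = #{b | f b = d} := by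
  have hflip : #{b | f b = d ∧ s b = u} = #{b | f b = d ∧ ¬ s b = u} := by
    refine Finset.card_nbij' T T ?_ ?_ (fun b _ => hT b) (fun b _ => hT b)
    · intro b hb
      simp only [coe_filter, mem_univ, true_and, Set.mem_ofPred_eq] at hb ⊢
      refine ⟨by rw [hf, hb.1], ?_⟩
      rw [hs, hb.2]
      exact units_ne_neg_self u |>.symm
    · intro b hb
      simp only [coe_filter, mem_univ, true_and, Set.mem_ofPred_eq] at hb ⊢
      refine ⟨by rw [hf, hb.1], ?_⟩
      rw [hs, Int.units_ne_iff_eq_neg.mp hb.2, neg_neg]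
  have hsum := Finset.card_filter_add_card_filter_not (s := ({b | f b = d} : Finset β))
    (fun b => s b = u)
  rw [Finset.filter_filter, Finset.filter_filter] at hsum
  omega

/-- If `f` and `g` are equidistributed, and a common involution preserves both while reversing
`s`, then the pairs `(f, s)` and `(g, s)` are equidistributed. -/
theorem exists_equiv_preserving_sign {β : Type*} [Fintype β] [DecidableEq β] (f g : β → ℕ)
    (s : β → ℤˣ) (T : β → β) (hT : Function.Involutive T) (hf : ∀ b, f (T b) = f b)
    (hg : ∀ b, g (T b) = g b) (hs : ∀ b, s (T b) = -s b)
    (F : β → β) (hF : Function.Injective F) (hfg : ∀ b, f (F b) = g b) :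
    ∃ Φ : β ≃ β, ∀ b, s (Φ b) = s b ∧ f b = g (Φ b) := by
  have hcard (d : ℕ) : #{b | f b = d} = #{b | g b = d} := by
    let e : β ≃ β := Equiv.ofBijective F (Finite.injective_iff_bijective.mp hF)
    symm
    refine Finset.card_equiv e fun b => ?_
    simp [e, hfg]
  have hfib (c : ℕ × ℤˣ) : Nonempty ({b // (f b, s b) = c} ≃ {b // (g b, s b) = c}) := by
    refine ⟨Fintype.equivOfCardEq ?_⟩
    obtain ⟨d, u⟩ := c
    have h1 := card_fiber_two_mul f s T hT hf hs d u
    have h2 := card_fiber_two_mul g s T hT hg hs d u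
    have h3 := hcard d
    simp only [Fintype.card_subtype, Prod.mk.injEq]
    omega
  refine ⟨Equiv.ofFiberEquiv fun c => (hfib c).some, fun b => ?_⟩
  have h := Equiv.ofFiberEquiv_map (f := fun b => (f b, s b)) (g := fun b => (g b, s b))
    (fun c => (hfib c).some) b
  simp only [Prod.mk.injEq] at h
  exact ⟨h.2, h.1.symm⟩

theorem oneLine_val_add_one {n : ℕ} (w : Equiv.Perm (Fin n)) (i : Fin n) :
    oneLine w (i + 1) = w i + 1 := by
  simp [oneLine]

theorem neg_one_pow_invNum {n : ℕ} (w : Equiv.Perm (Fin n)) :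
    (-1 : ℤ) ^ invNum w = (Equiv.Perm.sign w : ℤ) := by
  have hinv : invNum w = #{p : Fin n × Fin n | p.1 < p.2 ∧ w p.2 < w p.1} := by
    symm
    refine Finset.card_nbij (fun p => ((p.1 : ℕ) + 1, (p.2 : ℕ) + 1)) ?_ ?_ ?_
    · rintro ⟨i, j⟩ h
      simp only [coe_filter, mem_univ, true_and, Set.mem_ofPred_eq, mem_product, mem_Icc,
        oneLine_val_add_one] at h ⊢
      have := i.2
      have := j.2
      have := Fin.lt_def.mp h.1
      have := Fin.lt_def.mp h.2
      omega
    · rintro ⟨i, j⟩ _ ⟨k, l⟩ _ h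
      simp only [Prod.mk.injEq] at h ⊢
      exact ⟨Fin.ext (by omega), Fin.ext (by omega)⟩
    · rintro ⟨a, b⟩ h
      simp only [coe_filter, Set.mem_ofPred_eq, mem_product, mem_Icc] at h
      obtain ⟨⟨⟨ha, ha'⟩, hb, hb'⟩, hab, hw⟩ := h
      obtain ⟨i, hi⟩ : ∃ i : Fin n, (i : ℕ) + 1 = a := ⟨⟨a - 1, by omega⟩, by simp; omega⟩
      obtain ⟨j, hj⟩ : ∃ j : Fin n, (j : ℕ) + 1 = b := ⟨⟨b - 1, by omega⟩, by simp; omega⟩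
      subst hi hj
      rw [oneLine_val_add_one, oneLine_val_add_one] at hw
      refine ⟨(i, j), ?_, rfl⟩
      simp only [coe_filter, mem_univ, true_and, Set.mem_ofPred_eq, Fin.lt_def]
      omega
  have hprod : (Equiv.Perm.sign w) =
      ∏ p : Fin n × Fin n, if p.1 < p.2 ∧ w p.2 < w p.1 then (-1 : ℤˣ) else 1 := by
    rw [Equiv.Perm.sign_eq_prod_prod_Ioi, Fintype.prod_prod_type]
    refine Finset.prod_congr rfl fun i _ => ?_
    rw [← Finset.filter_lt_eq_Ioi, Finset.prod_filter]
    refine Finset.prod_congr rfl fun j _ => ?_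
    rcases lt_trichotomy (w i) (w j) with h | h | h
    · simp [h, h.not_gt]
    · simp [w.injective h]
    · simp [h, h.not_gt]
  rw [hprod, Finset.prod_ite, hinv]
  simp

theorem depthStat_eq_sum {n : ℕ} (w : Equiv.Perm (Fin n)) :
    depthStat w = ∑ i, ((w i : ℕ) - i) := by
  have h : depthStat w = ∑ k ∈ Finset.range n, (oneLine w (k + 1) - (k + 1)) := by
    rw [depthStat, Finset.sum_filter_of_ne fun k _ hk => by omega, Finset.range_eq_Ico,
      Finset.sum_Ico_add' (fun k => oneLine w k - k) 0 n 1]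
    rfl
  rw [h, ← Fin.sum_univ_eq_sum_range (fun k => oneLine w (k + 1) - (k + 1))]
  refine Finset.sum_congr rfl fun i _ => ?_
  rw [oneLine_val_add_one]
  omega

theorem depthStat_eq_sum_rev {n : ℕ} (w : Equiv.Perm (Fin n)) :
    depthStat w = ∑ i : Fin n, ((i : ℕ) - w i) := by
  rw [depthStat_eq_sum]
  have h1 : ∑ i : Fin n, (((w i : ℕ) - i) + i) = ∑ i : Fin n, (((i : ℕ) - w i) + w i) :=
    Finset.sum_congr rfl fun i _ => by omega
  have h2 : ∑ i, (w i : ℕ) = ∑ i : Fin n, (i : ℕ) := Equiv.sum_comp w (fun i => (i : ℕ))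
  rw [Finset.sum_add_distrib, Finset.sum_add_distrib] at h1
  omega

theorem drpStat_eq_sum {m : ℕ} (w : Equiv.Perm (Fin (m + 1))) :
    drpStat w = ∑ i : Fin m, ((w i.castSucc : ℕ) - w i.succ) := by
  have h : drpStat w = ∑ k ∈ Finset.range m, (oneLine w (k + 1) - oneLine w (k + 1 + 1)) := by
    rw [drpStat, Finset.sum_filter_of_ne fun k _ hk => by omega, Finset.range_eq_Ico,
      Finset.sum_Ico_add' (fun k => oneLine w k - oneLine w (k + 1)) 0 m 1]
    rfl
  rw [h, ← Fin.sum_univ_eq_sum_range (fun k => oneLine w (k + 1) - oneLine w (k + 1 + 1))]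
  refine Finset.sum_congr rfl fun i _ => ?_
  have h1 := oneLine_val_add_one w i.castSucc
  have h2 := oneLine_val_add_one w i.succ
  rw [Fin.val_castSucc] at h1
  rw [Fin.val_succ] at h2
  omega

/-- The minimum of the values of `w` at positions `≥ i`. -/
def tailMin {m : ℕ} (w : Equiv.Perm (Fin (m + 1))) (i : Fin (m + 1)) : Fin (m + 1) :=
  (Finset.Ici i).inf' ⟨i, by simp⟩ w

theorem tailMin_le {m : ℕ} (w : Equiv.Perm (Fin (m + 1))) {i j : Fin (m + 1)} (h : i ≤ j) :
    tailMin w i ≤ w j :=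
  Finset.inf'_le _ (by simpa using h)

theorem exists_tailMin_eq {m : ℕ} (w : Equiv.Perm (Fin (m + 1))) (i : Fin (m + 1)) :
    ∃ j, i ≤ j ∧ tailMin w i = w j := by
  obtain ⟨j, hj, h⟩ := Finset.exists_mem_eq_inf' (⟨i, by simp⟩ : (Finset.Ici i).Nonempty) w
  exact ⟨j, by simpa using hj, h⟩

/-- The preimages of the letters of `w` under its Foata transform: cutting the word `w` after each
right-to-left minimum and reading the blocks as cycles, `link w i` is the element mapped
to `w i`. -/
def link {m : ℕ} (w : Equiv.Perm (Fin (m + 1))) : Fin (m + 1) → Fin (m + 1) :=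
  Fin.cases 0 fun k => max (w k.castSucc) (tailMin w k.succ)

@[simp]
theorem link_zero {m : ℕ} (w : Equiv.Perm (Fin (m + 1))) : link w 0 = 0 := rfl

@[simp]
theorem link_succ {m : ℕ} (w : Equiv.Perm (Fin (m + 1))) (k : Fin m) :
    link w k.succ = max (w k.castSucc) (tailMin w k.succ) := rfl

theorem link_injective {m : ℕ} (w : Equiv.Perm (Fin (m + 1))) :
    Function.Injective (link w) := by
  refine Function.Injective.of_lt_imp_ne fun i j hij heq => ?_
  obtain ⟨k, rfl⟩ := Fin.exists_succ_eq_of_ne_zero (Fin.ne_zero_of_lt hij)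
  have hk : i ≤ k.castSucc := Fin.le_castSucc_iff.mpr hij
  obtain ⟨l, hl, htl⟩ := exists_tailMin_eq w k.succ
  have hkl : w k.castSucc ≠ w l := fun h =>
    (Fin.castSucc_lt_succ.trans_le hl).ne (w.injective h)
  have hlt (x : Fin (m + 1)) (hx : x < i) : w x ≠ w k.castSucc ∧ w x ≠ w l :=
    ⟨fun h => (hx.trans_le hk).ne (w.injective h),
      fun h => (hx.trans (hij.trans_le hl)).ne (w.injective h)⟩
  have h1 := tailMin_le w hk
  have h2 := tailMin_le w (hij.le.trans hl)
  rw [link_succ, htl] at heq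
  rcases Fin.eq_zero_or_eq_succ i with rfl | ⟨p, rfl⟩
  · rw [link_zero] at heq
    simp only [Fin.ext_iff, Fin.val_zero, Fin.coe_max, ne_eq] at heq hkl
    omega
  · have h3 := hlt p.castSucc Fin.castSucc_lt_succ
    rw [link_succ] at heq
    simp only [Fin.ext_iff, Fin.le_def, Fin.coe_max, ne_eq] at heq hkl h1 h2 h3
    omega

/-- The Foata-type transform of `w`, sending `link w i` to `w i`. -/
noncomputable def foata {m : ℕ} (w : Equiv.Perm (Fin (m + 1))) : Equiv.Perm (Fin (m + 1)) :=
  (Equiv.ofBijective (link w) (Finite.injective_iff_bijective.mp (link_injective w))).symm.trans w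

theorem foata_link {m : ℕ} (w : Equiv.Perm (Fin (m + 1))) (i : Fin (m + 1)) :
    foata w (link w i) = w i := by
  have h := Equiv.symm_apply_apply
    (Equiv.ofBijective (link w) (Finite.injective_iff_bijective.mp (link_injective w))) i
  rw [Equiv.ofBijective_apply] at h
  rw [foata, Equiv.trans_apply, h]

theorem foata_zero {m : ℕ} (w : Equiv.Perm (Fin (m + 1))) : foata w 0 = w 0 :=
  foata_link w 0

theorem depthStat_foata {m : ℕ} (w : Equiv.Perm (Fin (m + 1))) :
    depthStat (foata w) = drpStat w := by
  rw [depthStat_eq_sum_rev, drpStat_eq_sum,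
    ← Equiv.sum_comp (Equiv.ofBijective (link w)
      (Finite.injective_iff_bijective.mp (link_injective w))), Fin.sum_univ_succ]
  simp only [Equiv.ofBijective_apply, foata_link, link_zero, Fin.val_zero, Nat.zero_sub, zero_add]
  refine Finset.sum_congr rfl fun k _ => ?_
  have h := Fin.le_def.mp (tailMin_le w (le_refl k.succ))
  rw [link_succ, Fin.coe_max]
  omega

theorem tailMin_le_tailMin_of_agree {m : ℕ} {v w : Equiv.Perm (Fin (m + 1))} {i : Fin (m + 1)}
    (h : ∀ j < i, v j = w j) : tailMin v i ≤ tailMin w i := by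
  obtain ⟨j, hj, hwj⟩ := exists_tailMin_eq w i
  obtain ⟨l, hl⟩ := v.surjective (w j)
  rw [hwj, ← hl]
  refine tailMin_le v (not_lt.mp fun hli => ?_)
  rw [h l hli] at hl
  exact (hli.trans_le hj).ne (w.injective hl)

theorem foata_injective {m : ℕ} :
    Function.Injective (foata : Equiv.Perm (Fin (m + 1)) → Equiv.Perm (Fin (m + 1))) := by
  intro v w hvw
  ext1 i
  induction i using WellFoundedLT.induction with
  | ind i ih =>
    rw [← foata_link v, ← foata_link w, hvw]
    congr 1
    rcases Fin.eq_zero_or_eq_succ i with rfl | ⟨k, rfl⟩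
    · rfl
    · rw [link_succ, link_succ, ih k.castSucc Fin.castSucc_lt_succ,
        (tailMin_le_tailMin_of_agree ih).antisymm
          (tailMin_le_tailMin_of_agree fun j hj => (ih j hj).symm)]

/-- Exchange the two smallest values of a permutation. -/
def swapLow {m : ℕ} (w : Equiv.Perm (Fin (m + 2))) : Equiv.Perm (Fin (m + 2)) :=
  Equiv.swap 0 1 * w

theorem val_swapLow {m : ℕ} (w : Equiv.Perm (Fin (m + 2))) (i : Fin (m + 2)) :
    (swapLow w i).val = if (w i).val = 0 then 1 else if (w i).val = 1 then 0 else (w i).val := by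
  rw [swapLow, Equiv.Perm.mul_apply, Equiv.swap_apply_def]
  simp only [Fin.ext_iff, Fin.val_zero, Fin.val_one]
  split_ifs <;> simp

theorem swapLow_involutive {m : ℕ} :
    Function.Involutive (swapLow : Equiv.Perm (Fin (m + 2)) → Equiv.Perm (Fin (m + 2))) :=
  fun w => by rw [swapLow, swapLow, ← mul_assoc, Equiv.swap_mul_self, one_mul]

theorem sign_swapLow {m : ℕ} (w : Equiv.Perm (Fin (m + 2))) :
    Equiv.Perm.sign (swapLow w) = -Equiv.Perm.sign w := by
  rw [swapLow, Equiv.Perm.sign_mul, Equiv.Perm.sign_swap (by simp), neg_one_mul]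

theorem depthStat_swapLow {m : ℕ} (w : Equiv.Perm (Fin (m + 2))) (hw : 2 ≤ (w 0 : ℕ)) :
    depthStat (swapLow w) = depthStat w := by
  rw [depthStat_eq_sum, depthStat_eq_sum]
  refine Finset.sum_congr rfl fun i _ => ?_
  rw [val_swapLow]
  rcases Fin.eq_zero_or_eq_succ i with rfl | ⟨k, rfl⟩
  · split_ifs <;> omega
  · rw [Fin.val_succ]
    split_ifs <;> omega

theorem drpStat_eq_add_one {m : ℕ} (w : Equiv.Perm (Fin (m + 1))) (hw : w 0 ≠ 0) :
    drpStat w = ∑ i : Fin m, (max (w i.castSucc : ℕ) 1 - max (w i.succ : ℕ) 1) + 1 := by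
  have hone : ∑ i : Fin m, (if w i.succ = 0 then 1 else 0) = 1 := by
    have h : ∑ i : Fin (m + 1), (if w i = 0 then 1 else 0) = 1 := by
      rw [Equiv.sum_comp w (fun x => if x = 0 then 1 else 0)]
      simp
    rwa [Fin.sum_univ_succ, if_neg hw, zero_add] at h
  refine (drpStat_eq_sum w).trans (Eq.trans ?_ (congrArg _ hone))
  rw [← Finset.sum_add_distrib]
  refine Finset.sum_congr rfl fun i _ => ?_
  have hne : w i.castSucc ≠ w i.succ := fun h => Fin.castSucc_lt_succ.ne (w.injective h)
  simp only [ne_eq, Fin.ext_iff, Fin.val_zero] at hne ⊢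
  split_ifs <;> omega

theorem drpStat_swapLow {m : ℕ} (w : Equiv.Perm (Fin (m + 2))) (hw : 2 ≤ (w 0 : ℕ)) :
    drpStat (swapLow w) = drpStat w := by
  have hmax (i : Fin (m + 2)) : max (swapLow w i : ℕ) 1 = max (w i : ℕ) 1 := by
    rw [val_swapLow]
    split_ifs <;> omega
  rw [drpStat_eq_add_one w (by rw [ne_eq, Fin.ext_iff, Fin.val_zero]; omega),
    drpStat_eq_add_one (swapLow w)
      (by rw [ne_eq, Fin.ext_iff, Fin.val_zero, val_swapLow]; split_ifs <;> omega)]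
  simp only [hmax]

theorem three_le_oneLine_one_iff {m : ℕ} (w : Equiv.Perm (Fin (m + 1))) :
    3 ≤ oneLine w 1 ↔ 2 ≤ (w 0 : ℕ) := by
  have h := oneLine_val_add_one w 0
  rw [Fin.val_zero, zero_add] at h
  omega

/-- on B = {w : w(1) ≥ 3} there is a sign-preserving bijection
carrying depth to drp. -/
theorem stmt12 (n : ℕ) (hn : 2 ≤ n) :
    ∃ Φ : {w : Equiv.Perm (Fin n) // 3 ≤ oneLine w 1} →
          {w : Equiv.Perm (Fin n) // 3 ≤ oneLine w 1},
      Function.Bijective Φ ∧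
        ∀ w : {w : Equiv.Perm (Fin n) // 3 ≤ oneLine w 1},
          ((-1 : ℤ) ^ invNum (Φ w).1 = (-1 : ℤ) ^ invNum w.1) ∧
          depthStat w.1 = drpStat (Φ w).1 := by
  obtain ⟨m, rfl⟩ := Nat.exists_eq_add_of_le' hn
  let B := {w : Equiv.Perm (Fin (m + 2)) // 3 ≤ oneLine w 1}
  have hB (w : B) : 2 ≤ (w.1 0 : ℕ) := (three_le_oneLine_one_iff w.1).mp w.2
  have hT (w : B) : 3 ≤ oneLine (swapLow w.1) 1 := by
    have := hB w
    rw [three_le_oneLine_one_iff, val_swapLow]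
    split_ifs <;> omega
  have hF (w : B) : 3 ≤ oneLine (foata w.1) 1 := by
    rw [three_le_oneLine_one_iff, foata_zero]
    exact hB w
  obtain ⟨Φ, hΦ⟩ := exists_equiv_preserving_sign (β := B) (fun w => depthStat w.1)
    (fun w => drpStat w.1) (fun w => Equiv.Perm.sign w.1) (fun w => ⟨swapLow w.1, hT w⟩)
    (fun w => Subtype.ext (swapLow_involutive w.1)) (fun w => depthStat_swapLow w.1 (hB w))
    (fun w => drpStat_swapLow w.1 (hB w)) (fun w => sign_swapLow w.1)
    (fun w => ⟨foata w.1, hF w⟩)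
    (fun v w h => Subtype.ext (foata_injective (congrArg Subtype.val h)))
    (fun w => depthStat_foata w.1)
  refine ⟨Φ, Φ.bijective, fun w => ⟨?_, (hΦ w).2⟩⟩
  rw [neg_one_pow_invNum, neg_one_pow_invNum, (hΦ w).1]
end
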